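/- Let (V,E,Ψ) be a strongly connected planar box-like self-affine GIFS with positive weights (p_e) and graph-directed measure family (μ_v)_{v∈V}, and fix s∈ℝ and q≥0. (b1) If s ≤ t(q), then ‖A_{k+l}^{s,q}‖ ≤ ‖A_k^{s,q}‖·‖A_l^{s,q}‖ for all k,l≥1. (b2) If s > t(q), then there exist a constant c=c(s,q)>0 and J∈ℕ such that ‖A_{k+1}^{s,q}‖ ≥ c·‖A_k^{s,q}‖ for all k≥1, and max_{0≤j≤J} ‖A_{k+j+l}^{s,q}‖ ≥ c·‖A_k^{s,q}‖·‖A_l^{s,q}‖ for all k,l≥1. -/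

import Mathlib

open MeasureTheory Filter Set
open scoped Classical

noncomputable section

namespace LqGIFS

/-! ### Mesh cubes, moment sums, L^q spectra, box dimension -/

/-- Closed cube of the `δ`-mesh of `ℝ`. -/
def meshCube1 (δ : ℝ) (k : ℤ) : Set ℝ := Set.Icc ((k : ℝ) * δ) (((k : ℝ) + 1) * δ)

/-- Closed cube of the `δ`-mesh of `ℝ²`. -/
def meshCube2 (δ : ℝ) (k : ℤ × ℤ) : Set (ℝ × ℝ) :=
  (Set.Icc ((k.1 : ℝ) * δ) (((k.1 : ℝ) + 1) * δ)) ×ˢ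
    (Set.Icc ((k.2 : ℝ) * δ) (((k.2 : ℝ) + 1) * δ))

/-- The moment sum `D_δ^q(ν)` for a measure on `ℝ` (cubes of zero measure are omitted,
so that at `q = 0` this counts the mesh cubes of positive measure). -/
def Dq1 (ν : Measure ℝ) (δ q : ℝ) : ℝ :=
  ∑' k : ℤ, if ν (meshCube1 δ k) = 0 then 0 else (ν (meshCube1 δ k)).toReal ^ q

/-- The moment sum `D_δ^q(ν)` for a measure on `ℝ²`. -/
def Dq2 (ν : Measure (ℝ × ℝ)) (δ q : ℝ) : ℝ :=
  ∑' k : ℤ × ℤ, if ν (meshCube2 δ k) = 0 then 0 else (ν (meshCube2 δ k)).toReal ^ q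

/-- The `L^q`-spectrum of a measure on `ℝ` exists and equals `s` (i.e. upper and lower
`L^q`-spectra coincide and equal `s`). -/
def HasLq1 (ν : Measure ℝ) (q s : ℝ) : Prop :=
  Tendsto (fun δ : ℝ => Real.log (Dq1 ν δ q) / (-Real.log δ))
    (nhdsWithin 0 (Set.Ioi 0)) (nhds s)

/-- The `L^q`-spectrum of a measure on `ℝ²` exists and equals `s`. -/
def HasLq2 (ν : Measure (ℝ × ℝ)) (q s : ℝ) : Prop :=
  Tendsto (fun δ : ℝ => Real.log (Dq2 ν δ q) / (-Real.log δ))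
    (nhdsWithin 0 (Set.Ioi 0)) (nhds s)

/-- Number of closed `δ`-mesh cubes of `ℝ²` meeting `X`. -/
def boxCount (X : Set (ℝ × ℝ)) (δ : ℝ) : ℕ :=
  Set.ncard {k : ℤ × ℤ | (X ∩ meshCube2 δ k).Nonempty}

/-- The box dimension of `X` exists and equals `d`. -/
def HasBoxDim (X : Set (ℝ × ℝ)) (d : ℝ) : Prop :=
  Tendsto (fun δ : ℝ => Real.log (boxCount X δ) / (-Real.log δ))
    (nhdsWithin 0 (Set.Ioi 0)) (nhds d)

/-! ### Matrices: 1-norm, spectral radius, permutation matrices -/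

/-- The 1-norm `‖A‖ = ∑_{i,j} |a_{ij}|` of a square matrix. -/
def mnorm {ι : Type*} [Fintype ι] (A : Matrix ι ι ℝ) : ℝ := ∑ i, ∑ j, |A i j|

/-- The spectral radius of a square real matrix, via the Gelfand formula. -/
def specRad {ι : Type*} [Fintype ι] [DecidableEq ι] (A : Matrix ι ι ℝ) : ℝ :=
  Filter.limsup (fun k : ℕ => (mnorm (A ^ k)) ^ ((k : ℝ)⁻¹)) Filter.atTop

/-- A square 0-1 matrix with exactly one 1 in each row and each column. -/
def IsPermMatrix {ι : Type*} (Z : Matrix ι ι ℝ) : Prop :=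
  (∀ i j, Z i j = 0 ∨ Z i j = 1) ∧ (∀ i, ∃! j, Z i j = 1) ∧ (∀ j, ∃! i, Z i j = 1)

/-! ### Directed graphs -/

/-- Strong connectivity of the finite directed graph with edge set `E`,
initial vertex map `ini` and terminal vertex map `ter`. -/
def GraphSC {V E : Type*} (ini ter : E → V) : Prop :=
  ∀ v v' : V, Relation.TransGen (fun u u' : V => ∃ e, ini e = u ∧ ter e = u') v v'

/-- The matrix `F^{(q)}_{x,y}` with entry `p_{e'}^q a_{e'}^x b_{e'}^y` at `(e,e')` when
`t(e) = i(e')`, and `0` otherwise. -/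
def FmatG {V E : Type*} (ini ter : E → V) (p a b : E → ℝ) (q x y : ℝ) :
    Matrix E E ℝ :=
  fun e e' => if ter e = ini e' then p e' ^ q * a e' ^ x * b e' ^ y else 0

/-- `f` is the entrywise product of the normalized left and right Perron vectors of the
irreducible matrix `F^{(q)}_{x,y(x)}` (spectral radius 1). -/
def IsPerronData {V E : Type*} [Fintype E] [DecidableEq E] (ini ter : E → V)
    (p a b : E → ℝ) (q x yx : ℝ) (f : E → ℝ) : Prop :=
  specRad (FmatG ini ter p a b q x yx) = 1 ∧
  ∃ u v : E → ℝ, (∀ e, 0 < u e) ∧ (∀ e, 0 < v e) ∧ (∑ e, u e) = 1 ∧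
    (FmatG ini ter p a b q x yx).mulVec u = u ∧
    (FmatG ini ter p a b q x yx).vecMul v = v ∧
    (∑ e, v e * u e) = 1 ∧ (∀ e, f e = v e * u e)

/-! ### Planar box-like graph-directed self-affine systems -/

/-- A planar box-like self-affine GIFS: a finite directed graph together with, for each
edge `e`, a contraction `ψ_e(z) = T_e z + t_e` whose linear part is the diagonal matrix
`diag(±a_e, ±b_e)` (when `diag e = true`) or the anti-diagonal matrix with entries
`±a_e` (top right) and `±b_e` (bottom left) (when `diag e = false`), `0 < a_e, b_e < 1`. -/
structure BoxLikeGIFS (V E : Type*) where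
  init : E → V
  term : E → V
  a : E → ℝ
  b : E → ℝ
  sa : E → ℝ
  sb : E → ℝ
  diag : E → Bool
  trans : E → ℝ × ℝ
  a_mem : ∀ e, a e ∈ Set.Ioo (0 : ℝ) 1
  b_mem : ∀ e, b e ∈ Set.Ioo (0 : ℝ) 1
  sa_mem : ∀ e, sa e = 1 ∨ sa e = -1
  sb_mem : ∀ e, sb e = 1 ∨ sb e = -1
  edge_exists : ∀ v, ∃ e, init e = v

namespace BoxLikeGIFS

variable {V E : Type*}

/-- The contraction `ψ_e`. -/
def map (S : BoxLikeGIFS V E) (e : E) : ℝ × ℝ → ℝ × ℝ := fun z =>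
  if S.diag e then
    (S.sa e * S.a e * z.1 + (S.trans e).1, S.sb e * S.b e * z.2 + (S.trans e).2)
  else
    (S.sa e * S.a e * z.2 + (S.trans e).1, S.sb e * S.b e * z.1 + (S.trans e).2)

def StronglyConnected (S : BoxLikeGIFS V E) : Prop := GraphSC S.init S.term

/-- The open unit square `(0,1)²`. -/
def unitSq : Set (ℝ × ℝ) := Set.Ioo (0 : ℝ) 1 ×ˢ Set.Ioo (0 : ℝ) 1

/-- The rectangular open set condition. -/
def ROSC (S : BoxLikeGIFS V E) : Prop :=
  (∀ e : E, S.map e '' unitSq ⊆ unitSq) ∧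
  ∀ e e' : E, e ≠ e' → S.init e = S.init e' →
    Disjoint (S.map e '' unitSq) (S.map e' '' unitSq)

/-- Positive weights summing to one at each vertex. -/
def IsWeights [Fintype E] (S : BoxLikeGIFS V E) (p : E → ℝ) : Prop :=
  (∀ e, 0 < p e) ∧ ∀ v : V, (∑ e : E, if S.init e = v then p e else 0) = 1

/-- `μ` is the associated graph-directed box-like self-affine measure family. -/
def IsGDMeasure [Fintype E] (S : BoxLikeGIFS V E) (p : E → ℝ)
    (μ : V → Measure (ℝ × ℝ)) : Prop :=
  (∀ v, IsProbabilityMeasure (μ v)) ∧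
  ∀ v : V, μ v =
    ∑ e : E, if S.init e = v then
      ENNReal.ofReal (p e) • ((μ (S.term e)).map (S.map e)) else (0 : Measure (ℝ × ℝ))

/-- `X` is the associated graph-directed self-affine carpet family. -/
def IsGDAttractor (S : BoxLikeGIFS V E) (X : V → Set (ℝ × ℝ)) : Prop :=
  (∀ v, (X v).Nonempty ∧ IsCompact (X v)) ∧
  ∀ v : V, X v = ⋃ e : E, ⋃ _ : S.init e = v, S.map e '' X (S.term e)

/-- The matrix `F^{(q)}_{x,y}` of the system. -/
def Fmat (S : BoxLikeGIFS V E) (p : E → ℝ) (q x y : ℝ) : Matrix E E ℝ :=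
  FmatG S.init S.term p S.a S.b q x y

/-- The `(2#E) × (2#E)` block matrix `𝒢^{(q)}_{x,y}`, indexed by `E × Bool`
(`false` = first index of the block, `true` = second). -/
def Gmat (S : BoxLikeGIFS V E) (p : E → ℝ) (τx τy : V → ℝ) (q x y : ℝ) :
    Matrix (E × Bool) (E × Bool) ℝ := fun i j =>
  if S.term i.1 = S.init j.1 then
    if S.diag j.1 then
      if i.2 = false ∧ j.2 = false then
        p j.1 ^ q * S.a j.1 ^ (x + τx (S.term j.1)) * S.b j.1 ^ (y - τx (S.term j.1))
      else if i.2 = true ∧ j.2 = true then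
        p j.1 ^ q * S.b j.1 ^ (x + τy (S.term j.1)) * S.a j.1 ^ (y - τy (S.term j.1))
      else 0
    else
      if i.2 = false ∧ j.2 = true then
        p j.1 ^ q * S.a j.1 ^ (x + τy (S.term j.1)) * S.b j.1 ^ (y - τy (S.term j.1))
      else if i.2 = true ∧ j.2 = false then
        p j.1 ^ q * S.b j.1 ^ (x + τx (S.term j.1)) * S.a j.1 ^ (y - τx (S.term j.1))
      else 0
  else 0

/-! ### Words -/

/-- An admissible word: consecutive edges are composable. -/
def Admissible (S : BoxLikeGIFS V E) (w : List E) : Prop :=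
  List.Chain' (fun e e' => S.term e = S.init e') w

/-- `(c_w, d_w)`: width and height of the rectangle `ψ_w([0,1]²)`. -/
def wdims (S : BoxLikeGIFS V E) : List E → ℝ × ℝ
  | [] => (1, 1)
  | e :: w =>
      if S.diag e then (S.a e * (wdims S w).1, S.b e * (wdims S w).2)
      else (S.a e * (wdims S w).2, S.b e * (wdims S w).1)

/-- Whether `T_w` is diagonal (`true`) or anti-diagonal (`false`). -/
def wordDiag (S : BoxLikeGIFS V E) : List E → Bool
  | [] => true
  | e :: w => S.diag e == wordDiag S w

/-- The larger singular value `α₁(w) = max(c_w, d_w)` of `T_w`. -/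
def alpha1 (S : BoxLikeGIFS V E) (w : List E) : ℝ := max (S.wdims w).1 (S.wdims w).2

/-- The smaller singular value `α₂(w) = min(c_w, d_w)` of `T_w`. -/
def alpha2 (S : BoxLikeGIFS V E) (w : List E) : ℝ := min (S.wdims w).1 (S.wdims w).2

/-- Initial vertex of a (nonempty) word. -/
def wordInit [Nonempty V] (S : BoxLikeGIFS V E) (w : List E) : V :=
  (w.head?.map S.init).getD (Classical.arbitrary V)

/-- Terminal vertex of a (nonempty) word. -/
def wordTerm [Nonempty V] (S : BoxLikeGIFS V E) (w : List E) : V :=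
  (w.getLast?.map S.term).getD (Classical.arbitrary V)

/-- `p_w = p_{w_1} ⋯ p_{w_k}`. -/
def wordProb (p : E → ℝ) (w : List E) : ℝ := (w.map p).prod

/-- `τ_w(q)`: given the values `τx v`, `τy v` of the `L^q`-spectra of the two coordinate
projections of `μ_v`, this is the `L^q`-spectrum of the projection of `μ_{t(w)} ∘ ψ_w⁻¹`
onto the longest side of `ψ_w([0,1]²)`, i.e. `τx (t w)` if `π_w = π_x` and `τy (t w)`
otherwise. -/
def wordTau [Nonempty V] (S : BoxLikeGIFS V E) (τx τy : V → ℝ) (w : List E) : ℝ :=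
  if ((S.wdims w).2 ≤ (S.wdims w).1 ↔ S.wordDiag w = true) then τx (S.wordTerm w)
  else τy (S.wordTerm w)

/-- The modified singular value function
`φ^{s,q}(w) = p_w^q α₁(w)^{τ_w(q)} α₂(w)^{s - τ_w(q)}`. -/
def msvf [Nonempty V] (S : BoxLikeGIFS V E) (p : E → ℝ) (τx τy : V → ℝ)
    (s q : ℝ) (w : List E) : ℝ :=
  wordProb p w ^ q * S.alpha1 w ^ (S.wordTau τx τy w) *
    S.alpha2 w ^ (s - S.wordTau τx τy w)

/-- The modified singular value function matrix `A_k^{s,q}`. -/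
def Amat [Nonempty V] [Fintype E] (S : BoxLikeGIFS V E) (p : E → ℝ) (τx τy : V → ℝ)
    (s q : ℝ) (k : ℕ) : Matrix V V ℝ := fun v v' =>
  ∑ f : Fin k → E,
    if S.Admissible (List.ofFn f) ∧ S.wordInit (List.ofFn f) = v ∧
        S.wordTerm (List.ofFn f) = v'
    then S.msvf p τx τy s q (List.ofFn f) else 0

/-- The family `E^*_δ` of admissible words whose shortest side drops below `δ`
exactly at the last letter. -/
def EstarDelta (S : BoxLikeGIFS V E) (δ : ℝ) : Set (List E) :=
  {w | w ≠ [] ∧ S.Admissible w ∧ S.alpha2 w < δ ∧ δ ≤ S.alpha2 w.dropLast}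

end BoxLikeGIFS

/-! ### Partition of the projections, for the splitting proposition -/

/-- The projection family: `(v, false) ↦ μ_v^x` and `(v, true) ↦ μ_v^y`. -/
def projMeas {V : Type*} (μ : V → Measure (ℝ × ℝ)) (i : V × Bool) : Measure ℝ :=
  if i.2 then (μ i.1).map Prod.snd else (μ i.1).map Prod.fst

/-- `A`, `B` is a partition of the projection family `{μ_v^x, μ_v^y}_v` into two disjoint
families of cardinality `#V`, on each of which the `L^q`-spectra exist and share a common
value, and which splits `{μ_v^x, μ_v^y}` for each `v`. -/
def GoodPartition {V : Type*} [Fintype V] (μ : V → Measure (ℝ × ℝ))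
    (A B : Finset (V × Bool)) : Prop :=
  Disjoint A B ∧ A ∪ B = Finset.univ ∧
  A.card = Fintype.card V ∧ B.card = Fintype.card V ∧
  ∃ τA τB : ℝ → ℝ,
    (∀ q : ℝ, 0 ≤ q → ∀ i ∈ A, HasLq1 (projMeas μ i) q (τA q)) ∧
    (∀ q : ℝ, 0 ≤ q → ∀ i ∈ B, HasLq1 (projMeas μ i) q (τB q)) ∧
    ∀ v : V, ((v, false) ∈ A ∧ (v, true) ∈ B) ∨ ((v, false) ∈ B ∧ (v, true) ∈ A)

end LqGIFS

end

namespace LqGIFS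

/-! ### Moment sums of compactly supported measures on the line -/

/-- The contribution of the `k`-th mesh interval to the moment sum `Dq1`. -/
noncomputable def dqTerm (ν : Measure ℝ) (δ q : ℝ) (k : ℤ) : ℝ :=
  if ν (meshCube1 δ k) = 0 then 0 else (ν (meshCube1 δ k)).toReal ^ q

lemma dqTerm_nonneg (ν : Measure ℝ) (δ q : ℝ) (k : ℤ) : 0 ≤ dqTerm ν δ q k := by
  unfold dqTerm
  split_ifs <;> positivity

lemma dqTerm_pos {ν : Measure ℝ} [IsFiniteMeasure ν] {δ : ℝ} (q : ℝ) {k : ℤ}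
    (h : ν (meshCube1 δ k) ≠ 0) : 0 < dqTerm ν δ q k := by
  unfold dqTerm
  rw [if_neg h]
  exact Real.rpow_pos_of_pos (ENNReal.toReal_pos h (measure_ne_top _ _)) _

lemma summable_dqTerm {ν : Measure ℝ} {R : ℝ} (hν : ν (Icc (-R) R)ᶜ = 0) {δ : ℝ}
    (hδ : 0 < δ) (q : ℝ) : Summable (dqTerm ν δ q) := by
  apply summable_of_hasFiniteSupport
  refine (Set.finite_Icc (⌊-R / δ⌋ - 1) ⌈R / δ⌉).subset fun k hk => ?_
  by_contra hcon
  apply hk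
  have h0 : ν (meshCube1 δ k) = 0 := by
    refine measure_mono_null ?_ hν
    intro x hx hxR
    refine hcon ?_
    obtain ⟨h1, h2⟩ := hx
    obtain ⟨h3, h4⟩ := hxR
    have h5 : (k : ℝ) ≤ R / δ := by rw [le_div_iff₀ hδ]; linarith
    have h6 : -R / δ ≤ (k : ℝ) + 1 := by rw [div_le_iff₀ hδ]; linarith
    have h7 := Int.floor_le (-R / δ)
    have h8 := Int.le_ceil (R / δ)
    constructor
    · have : (⌊-R / δ⌋ : ℝ) ≤ ((k + 1 : ℤ) : ℝ) := by push_cast; linarith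
      have := Int.cast_le.mp this
      omega
    · exact_mod_cast h5.trans h8
  simp [dqTerm, h0]

lemma Dq1_pos {ν : Measure ℝ} [IsProbabilityMeasure ν] {R : ℝ} (hν : ν (Icc (-R) R)ᶜ = 0)
    {δ : ℝ} (hδ : 0 < δ) (q : ℝ) : 0 < Dq1 ν δ q := by
  have hex : ∃ k : ℤ, ν (meshCube1 δ k) ≠ 0 := by
    by_contra! hcon
    have h1 : ν (⋃ k : ℤ, meshCube1 δ k) = 0 := measure_iUnion_null hcon
    have h2 : (⋃ k : ℤ, meshCube1 δ k) = univ := by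
      refine eq_univ_of_forall fun x => mem_iUnion.2 ⟨⌊x / δ⌋, ?_, ?_⟩
      · exact (le_div_iff₀ hδ).1 (Int.floor_le _)
      · exact ((div_lt_iff₀ hδ).1 (Int.lt_floor_add_one _)).le
    rw [h2, measure_univ] at h1
    exact one_ne_zero h1
  obtain ⟨k, hk⟩ := hex
  exact (summable_dqTerm hν hδ q).tsum_pos (dqTerm_nonneg ν δ q) k (dqTerm_pos q hk)

/-- If a mesh interval is covered, up to the factor `P`, by two others, then so are the
contributions to the moment sums. -/
lemma dqTerm_le {ν ν' : Measure ℝ} [IsFiniteMeasure ν] [IsFiniteMeasure ν'] {P q δ δ' : ℝ}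
    (hP : 0 < P) (hq : 0 ≤ q) {k m n : ℤ}
    (h : ENNReal.ofReal P * ν' (meshCube1 δ' k) ≤ ν (meshCube1 δ m) + ν (meshCube1 δ n)) :
    dqTerm ν' δ' q k ≤ (2 / P) ^ q * (dqTerm ν δ q m + dqTerm ν δ q n) := by
  by_cases h0 : ν' (meshCube1 δ' k) = 0
  · have : dqTerm ν' δ' q k = 0 := by simp [dqTerm, h0]
    rw [this]
    have := dqTerm_nonneg ν δ q m
    have := dqTerm_nonneg ν δ q n
    positivity
  wlog hmn : ν (meshCube1 δ n) ≤ ν (meshCube1 δ m) generalizing m n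
  · rw [add_comm (dqTerm ν δ q m)]
    exact this (by rwa [add_comm]) (le_of_not_ge hmn)
  have h1 : ENNReal.ofReal P * ν' (meshCube1 δ' k) ≤ 2 * ν (meshCube1 δ m) := by
    rw [two_mul]
    exact h.trans (by gcongr)
  have hm : ν (meshCube1 δ m) ≠ 0 := by
    intro hm
    rw [hm, mul_zero, nonpos_iff_eq_zero, mul_eq_zero] at h1
    rcases h1 with h1 | h1
    · exact absurd hP (not_lt.2 (ENNReal.ofReal_eq_zero.1 h1))
    · exact h0 h1
  have h2 : P * (ν' (meshCube1 δ' k)).toReal ≤ 2 * (ν (meshCube1 δ m)).toReal := by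
    have := ENNReal.toReal_mono
      (ENNReal.mul_ne_top (by simp) (measure_ne_top ν _)) h1
    simpa [ENNReal.toReal_mul, ENNReal.toReal_ofReal hP.le] using this
  have h3 : (ν' (meshCube1 δ' k)).toReal ≤ 2 / P * (ν (meshCube1 δ m)).toReal := by
    rw [div_mul_eq_mul_div, le_div_iff₀ hP]
    linarith
  calc dqTerm ν' δ' q k = (ν' (meshCube1 δ' k)).toReal ^ q := by simp [dqTerm, h0]
    _ ≤ (2 / P * (ν (meshCube1 δ m)).toReal) ^ q := by gcongr
    _ = (2 / P) ^ q * dqTerm ν δ q m := by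
        rw [Real.mul_rpow (by positivity) (by positivity)]
        simp [dqTerm, hm]
    _ ≤ (2 / P) ^ q * (dqTerm ν δ q m + dqTerm ν δ q n) := by
        have := dqTerm_nonneg ν δ q n
        gcongr
        linarith

/-- An affine image of the mesh interval of side `δ / a` under a map of ratio `± a` is
covered by two adjacent mesh intervals of side `δ`, chosen injectively. -/
lemma exists_mesh_cover {σ a δ : ℝ} (hσ : σ = 1 ∨ σ = -1) (ha : 0 < a) (hδ : 0 < δ) (t : ℝ) :
    ∃ m : ℤ → ℤ, Function.Injective m ∧ ∀ k, meshCube1 (δ / a) k ⊆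
      (fun x => σ * a * x + t) ⁻¹' (meshCube1 δ (m k) ∪ meshCube1 δ (m k + 1)) := by
  have h1 : (⌊t / δ⌋ : ℝ) * δ ≤ t := (le_div_iff₀ hδ).1 (Int.floor_le _)
  have h2 : t < ((⌊t / δ⌋ : ℝ) + 1) * δ := (div_lt_iff₀ hδ).1 (Int.lt_floor_add_one _)
  have key : ∀ (m : ℤ) (y : ℝ), (m : ℝ) * δ ≤ y → y ≤ ((m : ℝ) + 2) * δ →
      y ∈ meshCube1 δ m ∪ meshCube1 δ (m + 1) := by
    intro m y hy1 hy2
    rcases le_total y (((m : ℝ) + 1) * δ) with h | h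
    · exact Or.inl ⟨hy1, h⟩
    · refine Or.inr ⟨by push_cast; exact h, ?_⟩
      push_cast
      linarith
  have hx : ∀ (k : ℤ) (x : ℝ), x ∈ meshCube1 (δ / a) k →
      (k : ℝ) * δ ≤ a * x ∧ a * x ≤ ((k : ℝ) + 1) * δ := by
    rintro k x ⟨hx1, hx2⟩
    have e1 : a * ((k : ℝ) * (δ / a)) = k * δ := by field_simp
    have e2 : a * (((k : ℝ) + 1) * (δ / a)) = (k + 1) * δ := by field_simp
    exact ⟨e1 ▸ mul_le_mul_of_nonneg_left hx1 ha.le, e2 ▸ mul_le_mul_of_nonneg_left hx2 ha.le⟩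
  rcases hσ with rfl | rfl
  · refine ⟨fun k => k + ⌊t / δ⌋, fun i j h => by simpa using h, fun k x hk => ?_⟩
    obtain ⟨h3, h4⟩ := hx k x hk
    refine key _ _ ?_ ?_ <;> push_cast <;> linarith
  · refine ⟨fun k => -(k + 1) + ⌊t / δ⌋, fun i j h => by simpa using h, fun k x hk => ?_⟩
    obtain ⟨h3, h4⟩ := hx k x hk
    refine key _ _ ?_ ?_ <;> push_cast <;> linarith

/-- Comparison of moment sums for a measure dominating an affine copy of another one. -/
lemma Dq1_le_of_affine_copy {ν ν' : Measure ℝ} [IsFiniteMeasure ν] [IsFiniteMeasure ν'] {R : ℝ}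
    (hν : ν (Icc (-R) R)ᶜ = 0) (hν' : ν' (Icc (-R) R)ᶜ = 0) {σ a P q t δ : ℝ}
    (hσ : σ = 1 ∨ σ = -1) (ha : 0 < a) (hP : 0 < P) (hq : 0 ≤ q) (hδ : 0 < δ)
    (h : ∀ A, MeasurableSet A →
      ENNReal.ofReal P * ν' ((fun x => σ * a * x + t) ⁻¹' A) ≤ ν A) :
    Dq1 ν' (δ / a) q ≤ 2 * (2 / P) ^ q * Dq1 ν δ q := by
  obtain ⟨m, hm, hcov⟩ := exists_mesh_cover hσ ha hδ t
  have hm' : Function.Injective fun k => m k + 1 := fun i j hij => hm (by simpa using hij)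
  have hs := summable_dqTerm hν hδ q
  have hs1 : Summable fun k => dqTerm ν δ q (m k) := hs.comp_injective hm
  have hs2 : Summable fun k => dqTerm ν δ q (m k + 1) := hs.comp_injective hm'
  have hmeas : ∀ k, MeasurableSet (meshCube1 δ k) := fun k => measurableSet_Icc
  have hterm : ∀ k, dqTerm ν' (δ / a) q k ≤
      (2 / P) ^ q * (dqTerm ν δ q (m k) + dqTerm ν δ q (m k + 1)) := fun k => by
    refine dqTerm_le hP hq ?_
    calc ENNReal.ofReal P * ν' (meshCube1 (δ / a) k)
        ≤ ENNReal.ofReal P * ν' ((fun x => σ * a * x + t) ⁻¹'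
            (meshCube1 δ (m k) ∪ meshCube1 δ (m k + 1))) := by
          gcongr
          exact hcov k
      _ ≤ ν (meshCube1 δ (m k) ∪ meshCube1 δ (m k + 1)) := h _ ((hmeas _).union (hmeas _))
      _ ≤ _ := measure_union_le _ _
  calc Dq1 ν' (δ / a) q = ∑' k, dqTerm ν' (δ / a) q k := rfl
    _ ≤ ∑' k, (2 / P) ^ q * (dqTerm ν δ q (m k) + dqTerm ν δ q (m k + 1)) :=
        (summable_dqTerm hν' (div_pos hδ ha) q).tsum_le_tsum hterm ((hs1.add hs2).mul_left _)
    _ = (2 / P) ^ q * (∑' k, dqTerm ν δ q (m k) + ∑' k, dqTerm ν δ q (m k + 1)) := by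
        rw [tsum_mul_left, hs1.tsum_add hs2]
    _ ≤ (2 / P) ^ q * (Dq1 ν δ q + Dq1 ν δ q) := by
        have h1 := tsum_comp_le_tsum_of_inj hs (dqTerm_nonneg ν δ q) hm
        have h2 := tsum_comp_le_tsum_of_inj hs (dqTerm_nonneg ν δ q) hm'
        gcongr
        · exact h1
        · exact h2
    _ = 2 * (2 / P) ^ q * Dq1 ν δ q := by ring

/-- The `L^q`-spectrum of a measure is at least that of any measure of which it dominates an
affine copy. -/
lemma HasLq1.le_of_affine_copy {ν ν' : Measure ℝ} [IsProbabilityMeasure ν]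
    [IsProbabilityMeasure ν'] {R : ℝ} (hν : ν (Icc (-R) R)ᶜ = 0)
    (hν' : ν' (Icc (-R) R)ᶜ = 0) {σ a P q t τ τ' : ℝ} (hσ : σ = 1 ∨ σ = -1) (ha : 0 < a)
    (hP : 0 < P) (hq : 0 ≤ q)
    (h : ∀ A, MeasurableSet A →
      ENNReal.ofReal P * ν' ((fun x => σ * a * x + t) ⁻¹' A) ≤ ν A)
    (hτ : HasLq1 ν q τ) (hτ' : HasLq1 ν' q τ') : τ' ≤ τ := by
  have hlog : Tendsto (fun δ : ℝ => -Real.log δ) (nhdsWithin 0 (Ioi 0)) atTop :=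
    tendsto_neg_atBot_atTop.comp Real.tendsto_log_nhdsGT_zero
  have hscale : Tendsto (fun δ : ℝ => δ / a) (nhdsWithin 0 (Ioi 0)) (nhdsWithin 0 (Ioi 0)) := by
    refine tendsto_nhdsWithin_iff.2 ⟨?_, ?_⟩
    · have : Tendsto (fun δ : ℝ => δ / a) (nhds 0) (nhds (0 / a)) := tendsto_id.div_const a
      rw [zero_div] at this
      exact this.mono_left nhdsWithin_le_nhds
    · filter_upwards [self_mem_nhdsWithin] with δ hδ using div_pos hδ ha
  have hratio : Tendsto (fun δ : ℝ => 1 + Real.log a / (-Real.log δ))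
      (nhdsWithin 0 (Ioi 0)) (nhds 1) := by
    simpa using (hlog.const_div_atTop (Real.log a)).const_add 1
  have hL := (hτ'.comp hscale).mul hratio
  have hR := (hlog.const_div_atTop (Real.log (2 * (2 / P) ^ q))).add hτ
  rw [mul_one] at hL
  rw [zero_add] at hR
  refine le_of_tendsto_of_tendsto hL hR ?_
  filter_upwards [self_mem_nhdsWithin, hlog.eventually_gt_atTop 0,
    (hlog.comp hscale).eventually_gt_atTop 0] with δ hδ hpos hpos'
  have hδ : 0 < δ := hδ
  have hle := Dq1_le_of_affine_copy hν hν' hσ ha hP hq hδ h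
  have hD' := Dq1_pos hν' (div_pos hδ ha) q
  have hD := Dq1_pos hν hδ q
  have hC : 0 < 2 * (2 / P) ^ q := by positivity
  have hll := Real.log_le_log hD' hle
  rw [Real.log_mul hC.ne' hD.ne'] at hll
  simp only [Function.comp_apply] at hpos' ⊢
  rw [Real.log_div hδ.ne' ha.ne'] at hpos' ⊢
  have e : Real.log (Dq1 ν' (δ / a) q) / (-(Real.log δ - Real.log a)) *
      (1 + Real.log a / -Real.log δ) = Real.log (Dq1 ν' (δ / a) q) / (-Real.log δ) := by
    have h1 : Real.log δ ≠ 0 := by linarith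
    have h2 : Real.log δ - Real.log a ≠ 0 := by linarith
    have h3 : -Real.log δ + Real.log a ≠ 0 := by intro h3; apply h2; linarith
    field_simp
    ring
  rw [e, ← add_div]
  gcongr

namespace BoxLikeGIFS

variable {V E : Type*}

/-! ### Compact support of the measures and invariance of the projected spectra -/

lemma continuous_map (S : BoxLikeGIFS V E) (e : E) : Continuous (S.map e) := by
  unfold BoxLikeGIFS.map
  split_ifs <;> fun_prop

lemma measure_apply_eq_sum [Fintype E] {S : BoxLikeGIFS V E} {p : E → ℝ}
    {μ : V → Measure (ℝ × ℝ)} (hμ : S.IsGDMeasure p μ) (v : V) {A : Set (ℝ × ℝ)}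
    (hA : MeasurableSet A) :
    μ v A = ∑ e : E, if S.init e = v then
      ENNReal.ofReal (p e) * μ (S.term e) (S.map e ⁻¹' A) else 0 := by
  conv_lhs => rw [hμ.2 v]
  rw [Measure.finsetSum_apply]
  refine Finset.sum_congr rfl fun e _ => ?_
  split_ifs
  · rw [Measure.smul_apply, Measure.map_apply (S.continuous_map e).measurable hA, smul_eq_mul]
  · simp

lemma mul_measure_preimage_le [Fintype E] {S : BoxLikeGIFS V E} {p : E → ℝ}
    {μ : V → Measure (ℝ × ℝ)} (hμ : S.IsGDMeasure p μ) (e : E) {A : Set (ℝ × ℝ)}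
    (hA : MeasurableSet A) :
    ENNReal.ofReal (p e) * μ (S.term e) (S.map e ⁻¹' A) ≤ μ (S.init e) A := by
  rw [measure_apply_eq_sum hμ _ hA]
  refine le_trans ?_ (Finset.single_le_sum (fun _ _ => zero_le) (Finset.mem_univ e))
  simp

/-- The maps of the system contract uniformly, up to a bounded translation. -/
lemma exists_norm_map_le [Fintype E] (S : BoxLikeGIFS V E) :
    ∃ r T : ℝ, 0 ≤ r ∧ r < 1 ∧ ∀ e z, ‖S.map e z‖ ≤ r * ‖z‖ + T := by
  have h1 : ∃ r : ℝ, 0 ≤ r ∧ r < 1 ∧ ∀ e, S.a e ≤ r ∧ S.b e ≤ r := by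
    rcases isEmpty_or_nonempty E with hE | hE
    · exact ⟨0, le_rfl, one_pos, fun e => hE.elim e⟩
    · obtain ⟨e₀, he₀⟩ := Finite.exists_max fun e => max (S.a e) (S.b e)
      exact ⟨max (S.a e₀) (S.b e₀), (S.a_mem e₀).1.le.trans (le_max_left _ _),
        max_lt (S.a_mem e₀).2 (S.b_mem e₀).2, fun e => max_le_iff.1 (he₀ e)⟩
  obtain ⟨r, hr0, hr1, hr⟩ := h1
  refine ⟨r, ∑ e, ‖S.trans e‖, hr0, hr1, fun e z => ?_⟩
  have hT : ‖S.trans e‖ ≤ ∑ e, ‖S.trans e‖ :=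
    Finset.single_le_sum (f := fun e => ‖S.trans e‖) (fun _ _ => norm_nonneg _)
      (Finset.mem_univ e)
  have coord : ∀ σ c x t : ℝ, (σ = 1 ∨ σ = -1) → 0 < c → c ≤ r → |x| ≤ ‖z‖ →
      |t| ≤ ‖S.trans e‖ → ‖σ * c * x + t‖ ≤ r * ‖z‖ + ∑ e, ‖S.trans e‖ := by
    intro σ c x t hσ hc0 hc hx ht
    have hσ1 : |σ| = 1 := by rcases hσ with rfl | rfl <;> simp
    calc ‖σ * c * x + t‖ ≤ |σ * c * x| + |t| := abs_add_le _ _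
      _ = c * |x| + |t| := by rw [abs_mul, abs_mul, hσ1, abs_of_pos hc0, one_mul]
      _ ≤ r * ‖z‖ + ∑ e, ‖S.trans e‖ :=
        add_le_add (mul_le_mul hc hx (abs_nonneg _) hr0) (ht.trans hT)
  have hz1 : |z.1| ≤ ‖z‖ := norm_fst_le z
  have hz2 : |z.2| ≤ ‖z‖ := norm_snd_le z
  have ht1 : |(S.trans e).1| ≤ ‖S.trans e‖ := norm_fst_le (S.trans e)
  have ht2 : |(S.trans e).2| ≤ ‖S.trans e‖ := norm_snd_le (S.trans e)
  have ha := (S.a_mem e).1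
  have hb := (S.b_mem e).1
  unfold BoxLikeGIFS.map
  split_ifs <;> refine max_le ?_ ?_ <;> apply coord <;>
    first
      | assumption
      | exact S.sa_mem e
      | exact S.sb_mem e
      | exact (hr e).1
      | exact (hr e).2

/-- The measures of a graph-directed family are supported in a common bounded set. -/
lemma exists_measure_norm_gt_eq_zero [Fintype V] [Fintype E] {S : BoxLikeGIFS V E} {p : E → ℝ}
    (hp : S.IsWeights p) {μ : V → Measure (ℝ × ℝ)} (hμ : S.IsGDMeasure p μ) :
    ∃ R : ℝ, ∀ v, μ v {z | R < ‖z‖} = 0 := by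
  have hprob := hμ.1
  obtain ⟨r, T, hr0, hr1, hmap⟩ := S.exists_norm_map_le
  have hmeas : ∀ R : ℝ, MeasurableSet {z : ℝ × ℝ | R < ‖z‖} := fun R =>
    measurableSet_lt measurable_const measurable_norm
  have hstep : ∀ R : ℝ, (T + 1) / (1 - r) ≤ R → ∀ C : ENNReal,
      (∀ v, μ v {z | R + 1 < ‖z‖} ≤ C) → ∀ v, μ v {z | R < ‖z‖} ≤ C := by
    intro R hR C hC v
    rw [div_le_iff₀ (by linarith)] at hR
    have hsum : (∑ e : E, if S.init e = v then ENNReal.ofReal (p e) else 0) = 1 := by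
      have h1 := hp.2 v
      have h2 : ∀ e : E, (if S.init e = v then ENNReal.ofReal (p e) else 0) =
          ENNReal.ofReal (if S.init e = v then p e else 0) := fun e => by
        split_ifs <;> simp
      rw [Finset.sum_congr rfl fun e _ => h2 e, ← ENNReal.ofReal_sum_of_nonneg, h1,
        ENNReal.ofReal_one]
      intro e _
      split_ifs
      · exact (hp.1 e).le
      · exact le_rfl
    rw [measure_apply_eq_sum hμ v (hmeas R)]
    calc _ ≤ ∑ e : E, (if S.init e = v then ENNReal.ofReal (p e) else 0) * C := by
          refine Finset.sum_le_sum fun e _ => ?_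
          split_ifs
          · refine mul_le_mul_right ?_ _
            refine (measure_mono fun z hz => ?_).trans (hC (S.term e))
            by_contra hcon
            have hz : R < ‖S.map e z‖ := hz
            have hcon : ‖z‖ ≤ R + 1 := not_lt.1 hcon
            have := hmap e z
            have := mul_le_mul_of_nonneg_left hcon hr0
            linarith
          · simp
      _ = C := by rw [← Finset.sum_mul, hsum, one_mul]
  refine ⟨(T + 1) / (1 - r), fun v => ?_⟩
  set R₀ := (T + 1) / (1 - r)
  have hiter : ∀ (n : ℕ) (C : ENNReal), (∀ v, μ v {z | R₀ + n < ‖z‖} ≤ C) →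
      ∀ v, μ v {z | R₀ < ‖z‖} ≤ C := by
    intro n
    induction n with
    | zero => intro C h; simpa using h
    | succ n ih =>
      intro C h
      refine ih C (hstep (R₀ + n) (by simp) C ?_)
      simpa [add_assoc] using h
  have htend : ∀ v, Tendsto (fun n : ℕ => μ v {z | R₀ + n < ‖z‖}) atTop (nhds 0) := by
    intro v
    have hanti : Antitone fun n : ℕ => {z : ℝ × ℝ | R₀ + n < ‖z‖} := by
      intro m n hmn z hz
      have hmn : (m : ℝ) ≤ n := Nat.cast_le.2 hmn
      have hz : R₀ + n < ‖z‖ := hz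
      show R₀ + m < ‖z‖
      linarith
    have hempty : (⋂ n : ℕ, {z : ℝ × ℝ | R₀ + n < ‖z‖}) = ∅ := by
      refine eq_empty_of_forall_notMem fun z hz => ?_
      obtain ⟨n, hn⟩ := exists_nat_gt (‖z‖ - R₀)
      have hz : R₀ + n < ‖z‖ := mem_iInter.1 hz n
      linarith
    have := tendsto_measure_iInter_atTop (μ := μ v)
      (fun n => (hmeas (R₀ + (n : ℕ))).nullMeasurableSet) hanti ⟨0, measure_ne_top _ _⟩
    rwa [hempty, measure_empty] at this
  refine le_antisymm (le_of_forall_gt fun C hC => ?_) (zero_le)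
  obtain ⟨D, hD0, hD⟩ := exists_between hC
  obtain ⟨n, hn⟩ := (eventually_all.2 fun v => (htend v).eventually_le_const hD0).exists
  exact (hiter n D hn v).trans_lt hD

/-- The pair of spectra at a vertex, with `true` for the `x`-projection and `false` for the
`y`-projection. -/
noncomputable def projTau (τx τy : V → ℝ) (c : Bool) (v : V) : ℝ := if c then τx v else τy v

/-- The spectrum of a projection of `μ_{i(e)}` is at least that of the projection of
`μ_{t(e)}` to the direction which `ψ_e` maps to it. -/
lemma projTau_term_le [Fintype V] [Fintype E] {S : BoxLikeGIFS V E} {p : E → ℝ}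
    (hp : S.IsWeights p) {μ : V → Measure (ℝ × ℝ)} (hμ : S.IsGDMeasure p μ) {q : ℝ}
    (hq : 0 ≤ q) {τx τy : V → ℝ} (hτx : ∀ v, HasLq1 ((μ v).map Prod.fst) q (τx v))
    (hτy : ∀ v, HasLq1 ((μ v).map Prod.snd) q (τy v)) (e : E) (c : Bool) :
    projTau τx τy (c == S.diag e) (S.term e) ≤ projTau τx τy c (S.init e) := by
  have hprob := hμ.1
  obtain ⟨R, hR⟩ := exists_measure_norm_gt_eq_zero hp hμ
  have hfst : ∀ v, ((μ v).map Prod.fst) (Icc (-R) R)ᶜ = 0 := fun v => by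
    rw [Measure.map_apply measurable_fst measurableSet_Icc.compl]
    refine measure_mono_null (fun z hz => ?_) (hR v)
    refine lt_of_lt_of_le ?_ (norm_fst_le z)
    rw [Real.norm_eq_abs, ← not_le, abs_le]
    exact hz
  have hsnd : ∀ v, ((μ v).map Prod.snd) (Icc (-R) R)ᶜ = 0 := fun v => by
    rw [Measure.map_apply measurable_snd measurableSet_Icc.compl]
    refine measure_mono_null (fun z hz => ?_) (hR v)
    refine lt_of_lt_of_le ?_ (norm_snd_le z)
    rw [Real.norm_eq_abs, ← not_le, abs_le]
    exact hz
  have pfst : ∀ v, IsProbabilityMeasure ((μ v).map Prod.fst) := fun v =>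
    Measure.isProbabilityMeasure_map measurable_fst.aemeasurable
  have psnd : ∀ v, IsProbabilityMeasure ((μ v).map Prod.snd) := fun v =>
    Measure.isProbabilityMeasure_map measurable_snd.aemeasurable
  have hdom : ∀ f g : ℝ × ℝ → ℝ, Measurable f → Measurable g → ∀ h : ℝ → ℝ, Measurable h →
      (∀ z, g (S.map e z) = h (f z)) → ∀ A, MeasurableSet A →
      ENNReal.ofReal (p e) * ((μ (S.term e)).map f) (h ⁻¹' A) ≤ ((μ (S.init e)).map g) A := by
    intro f g hf hg h hh hcomm A hA
    rw [Measure.map_apply hf (hh hA), Measure.map_apply hg hA]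
    convert mul_measure_preimage_le hμ e (hg hA) using 3
    ext z
    simp [hcomm]
  have ha := (S.a_mem e).1
  have hb := (S.b_mem e).1
  cases hd : S.diag e <;> cases c
  · exact (hτy _).le_of_affine_copy (hsnd _) (hfst _) (S.sb_mem e) hb (hp.1 e) hq
      (hdom Prod.fst Prod.snd measurable_fst measurable_snd
        (fun x => S.sb e * S.b e * x + (S.trans e).2) (by fun_prop)
        fun z => by simp [BoxLikeGIFS.map, hd]) (hτx _)
  · exact (hτx _).le_of_affine_copy (hfst _) (hsnd _) (S.sa_mem e) ha (hp.1 e) hq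
      (hdom Prod.snd Prod.fst measurable_snd measurable_fst
        (fun x => S.sa e * S.a e * x + (S.trans e).1) (by fun_prop)
        fun z => by simp [BoxLikeGIFS.map, hd]) (hτy _)
  · exact (hτy _).le_of_affine_copy (hsnd _) (hsnd _) (S.sb_mem e) hb (hp.1 e) hq
      (hdom Prod.snd Prod.snd measurable_snd measurable_snd
        (fun x => S.sb e * S.b e * x + (S.trans e).2) (by fun_prop)
        fun z => by simp [BoxLikeGIFS.map, hd]) (hτy _)
  · exact (hτx _).le_of_affine_copy (hfst _) (hfst _) (S.sa_mem e) ha (hp.1 e) hq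
      (hdom Prod.fst Prod.fst measurable_fst measurable_fst
        (fun x => S.sa e * S.a e * x + (S.trans e).1) (by fun_prop)
        fun z => by simp [BoxLikeGIFS.map, hd]) (hτx _)

/-- The projected spectra are carried along the edges. -/
def TauInvariant (S : BoxLikeGIFS V E) (τx τy : V → ℝ) : Prop :=
  ∀ e c, projTau τx τy (c == S.diag e) (S.term e) = projTau τx τy c (S.init e)

lemma tauInvariant_of_hasLq1 [Fintype V] [Fintype E] {S : BoxLikeGIFS V E} {p : E → ℝ}
    (hp : S.IsWeights p) {μ : V → Measure (ℝ × ℝ)} (hμ : S.IsGDMeasure p μ) {q : ℝ}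
    (hq : 0 ≤ q) {τx τy : V → ℝ} (hτx : ∀ v, HasLq1 ((μ v).map Prod.fst) q (τx v))
    (hτy : ∀ v, HasLq1 ((μ v).map Prod.snd) q (τy v)) {tq : ℝ}
    (htq : ∀ v, τx v + τy v = tq) : S.TauInvariant τx τy := by
  intro e c
  have h1 := projTau_term_le hp hμ hq hτx hτy e true
  have h2 := projTau_term_le hp hμ hq hτx hτy e false
  have h3 := htq (S.init e)
  have h4 := htq (S.term e)
  cases hd : S.diag e <;> cases c <;> simp [projTau, hd] at h1 h2 ⊢ <;> linarith

/-! ### Concatenation of words -/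

lemma wdims_append (S : BoxLikeGIFS V E) (u w : List E) :
    S.wdims (u ++ w) = if S.wordDiag u then
      ((S.wdims u).1 * (S.wdims w).1, (S.wdims u).2 * (S.wdims w).2)
    else ((S.wdims u).1 * (S.wdims w).2, (S.wdims u).2 * (S.wdims w).1) := by
  induction u with
  | nil => simp [wdims, wordDiag]
  | cons e u ih =>
    rcases Bool.eq_false_or_eq_true (S.diag e) with hd | hd <;>
      rcases Bool.eq_false_or_eq_true (S.wordDiag u) with hu | hu <;>
      simp [wdims, wordDiag, ih, hd, hu, mul_assoc]

lemma wdims_pos (S : BoxLikeGIFS V E) (w : List E) :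
    0 < (S.wdims w).1 ∧ 0 < (S.wdims w).2 := by
  induction w with
  | nil => simp [wdims]
  | cons e w ih =>
    have ha := (S.a_mem e).1
    have hb := (S.b_mem e).1
    unfold wdims
    split_ifs
    · exact ⟨mul_pos ha ih.1, mul_pos hb ih.2⟩
    · exact ⟨mul_pos ha ih.2, mul_pos hb ih.1⟩

lemma alpha2_pos (S : BoxLikeGIFS V E) (w : List E) : 0 < S.alpha2 w :=
  lt_min (S.wdims_pos w).1 (S.wdims_pos w).2

/-- The smaller singular value is supermultiplicative. -/
lemma alpha2_mul_le (S : BoxLikeGIFS V E) (u w : List E) :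
    S.alpha2 u * S.alpha2 w ≤ S.alpha2 (u ++ w) := by
  have hu := S.wdims_pos u
  have hw := (S.alpha2_pos w).le
  unfold alpha2 at hw ⊢
  rw [wdims_append]
  split_ifs <;> refine le_min ?_ ?_ <;> refine mul_le_mul ?_ ?_ hw ?_ <;>
    first
      | exact min_le_left _ _
      | exact min_le_right _ _
      | exact hu.1.le
      | exact hu.2.le

lemma wordProb_pos {p : E → ℝ} (hp : ∀ e, 0 < p e) (w : List E) : 0 < wordProb p w :=
  List.prod_pos (by simpa using fun e _ => hp e)

section Vertices

variable [Nonempty V]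

@[simp]
lemma wordInit_cons (S : BoxLikeGIFS V E) (e : E) (w : List E) :
    S.wordInit (e :: w) = S.init e := rfl

@[simp]
lemma wordTerm_concat (S : BoxLikeGIFS V E) (e : E) (w : List E) :
    S.wordTerm (w ++ [e]) = S.term e := by
  simp [wordTerm]

lemma wordInit_append (S : BoxLikeGIFS V E) {u : List E} (hu : u ≠ []) (w : List E) :
    S.wordInit (u ++ w) = S.wordInit u := by
  cases u with
  | nil => exact absurd rfl hu
  | cons e u => rfl

lemma wordTerm_append (S : BoxLikeGIFS V E) (u : List E) {w : List E} (hw : w ≠ []) :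
    S.wordTerm (u ++ w) = S.wordTerm w := by
  obtain ⟨w, e, rfl⟩ := (List.eq_nil_or_concat w).resolve_left hw
  rw [List.concat_eq_append, ← List.append_assoc, wordTerm_concat, wordTerm_concat]

lemma wordTerm_cons (S : BoxLikeGIFS V E) (e : E) {w : List E} (hw : w ≠ []) :
    S.wordTerm (e :: w) = S.wordTerm w :=
  S.wordTerm_append [e] hw

lemma wordTerm_singleton (S : BoxLikeGIFS V E) (e : E) : S.wordTerm [e] = S.term e := rfl

lemma admissible_append_iff (S : BoxLikeGIFS V E) {u w : List E} (hu : u ≠ []) (hw : w ≠ []) :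
    S.Admissible (u ++ w) ↔
      S.Admissible u ∧ S.Admissible w ∧ S.wordTerm u = S.wordInit w := by
  obtain ⟨u, e, rfl⟩ := (List.eq_nil_or_concat u).resolve_left hu
  obtain ⟨e', w, rfl⟩ := List.exists_cons_of_ne_nil hw
  rw [List.concat_eq_append, wordTerm_concat, wordInit_cons]
  refine List.isChain_append.trans (and_congr Iff.rfl (and_congr Iff.rfl ?_))
  simp

/-- The spectra are carried along words. -/
lemma TauInvariant.word {S : BoxLikeGIFS V E} {τx τy : V → ℝ} (h : S.TauInvariant τx τy)
    {w : List E} (hw : w ≠ []) (hadm : S.Admissible w) (c : Bool) :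
    projTau τx τy (c == S.wordDiag w) (S.wordTerm w) = projTau τx τy c (S.wordInit w) := by
  induction w generalizing c with
  | nil => exact absurd rfl hw
  | cons e w ih =>
    rw [wordInit_cons, ← h e c]
    rcases eq_or_ne w [] with rfl | hw'
    · simp [wordDiag, wordTerm_singleton]
    · obtain ⟨-, hadm', hterm⟩ := (S.admissible_append_iff (u := [e]) (by simp) hw').1 hadm
      rw [wordTerm_singleton] at hterm
      rw [S.wordTerm_cons e hw', hterm, ← ih hw' hadm']
      congr 1
      simp only [wordDiag]
      cases c <;> cases S.diag e <;> cases S.wordDiag w <;> rfl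

/-- The multiplicative part of the modified singular value function. -/
noncomputable def mulPart (S : BoxLikeGIFS V E) (p : E → ℝ) (τx τy : V → ℝ) (q : ℝ)
    (w : List E) : ℝ :=
  wordProb p w ^ q * (S.wdims w).1 ^ τx (S.wordInit w) * (S.wdims w).2 ^ τy (S.wordInit w)

lemma mulPart_pos (S : BoxLikeGIFS V E) {p : E → ℝ} (hp : ∀ e, 0 < p e) (τx τy : V → ℝ)
    (q : ℝ) (w : List E) : 0 < S.mulPart p τx τy q w := by
  have h1 := (S.wdims_pos w).1
  have h2 := (S.wdims_pos w).2
  have h3 := wordProb_pos hp w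
  unfold mulPart
  positivity

lemma msvf_eq {S : BoxLikeGIFS V E} {τx τy : V → ℝ} (h : S.TauInvariant τx τy) {tq : ℝ}
    (htq : ∀ v, τx v + τy v = tq) (p : E → ℝ) (s q : ℝ) {w : List E} (hw : w ≠ [])
    (hadm : S.Admissible w) :
    S.msvf p τx τy s q w = S.mulPart p τx τy q w * S.alpha2 w ^ (s - tq) := by
  have h1 := (S.wdims_pos w).1
  have h2 := (S.wdims_pos w).2
  have hx := h.word hw hadm true
  have hy := h.word hw hadm false
  have ht := htq (S.wordInit w)
  unfold msvf mulPart
  rw [mul_assoc, mul_assoc, mul_assoc]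
  congr 1
  rcases le_or_gt (S.wdims w).2 (S.wdims w).1 with hle | hlt
  · have e1 : S.wordTau τx τy w = τx (S.wordInit w) := by
      unfold wordTau
      cases hd : S.wordDiag w <;> simp [projTau, hd, hle] at hx ⊢ <;> exact hx
    rw [e1, alpha1, alpha2, max_eq_left hle, min_eq_right hle, ← Real.rpow_add h2]
    congr 2
    linarith
  · have e1 : S.wordTau τx τy w = τy (S.wordInit w) := by
      unfold wordTau
      cases hd : S.wordDiag w <;> simp [projTau, hd, not_le.2 hlt] at hy ⊢ <;> exact hy
    rw [e1, alpha1, alpha2, max_eq_right hlt.le, min_eq_left hlt.le, mul_left_comm,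
      ← Real.rpow_add h1]
    congr 2
    linarith

lemma mulPart_append {S : BoxLikeGIFS V E} {τx τy : V → ℝ} (h : S.TauInvariant τx τy)
    {p : E → ℝ} (hp : ∀ e, 0 < p e) (q : ℝ) {u w : List E} (hu : u ≠ [])
    (hadm : S.Admissible u) (huw : S.wordTerm u = S.wordInit w) :
    S.mulPart p τx τy q (u ++ w) = S.mulPart p τx τy q u * S.mulPart p τx τy q w := by
  have hx := h.word hu hadm true
  have hy := h.word hu hadm false
  have hu1 := (S.wdims_pos u).1.le
  have hu2 := (S.wdims_pos u).2.le
  have hw1 := (S.wdims_pos w).1.le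
  have hw2 := (S.wdims_pos w).2.le
  have hprob : wordProb p (u ++ w) ^ q = wordProb p u ^ q * wordProb p w ^ q := by
    rw [← Real.mul_rpow (wordProb_pos hp u).le (wordProb_pos hp w).le]
    simp [wordProb]
  unfold mulPart
  rw [hprob, wordInit_append _ hu, wdims_append, ← huw]
  cases hd : S.wordDiag u
  · simp only [hd, projTau] at hx hy
    simp at hx hy
    simp only [Bool.false_eq_true, if_false]
    rw [Real.mul_rpow hu1 hw2, Real.mul_rpow hu2 hw1, hx, hy]
    ring
  · simp only [hd, projTau] at hx hy
    simp at hx hy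
    simp only [if_true]
    rw [Real.mul_rpow hu1 hw1, Real.mul_rpow hu2 hw2, hx, hy]
    ring

lemma msvf_pos (S : BoxLikeGIFS V E) {p : E → ℝ} (hp : ∀ e, 0 < p e) (τx τy : V → ℝ)
    (s q : ℝ) (w : List E) : 0 < S.msvf p τx τy s q w := by
  have h1 : 0 < S.alpha1 w := lt_max_of_lt_left (S.wdims_pos w).1
  have h2 := S.alpha2_pos w
  have h3 := wordProb_pos hp w
  unfold msvf
  positivity

/-- Below the threshold the modified singular value function is submultiplicative. -/
lemma msvf_append_le {S : BoxLikeGIFS V E} {τx τy : V → ℝ} (h : S.TauInvariant τx τy) {tq : ℝ}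
    (htq : ∀ v, τx v + τy v = tq) {p : E → ℝ} (hp : ∀ e, 0 < p e) {s : ℝ} (hs : s ≤ tq)
    (q : ℝ) {u w : List E} (hu : u ≠ []) (hw : w ≠ []) (hadm : S.Admissible (u ++ w)) :
    S.msvf p τx τy s q (u ++ w) ≤ S.msvf p τx τy s q u * S.msvf p τx τy s q w := by
  obtain ⟨hau, haw, huw⟩ := (S.admissible_append_iff hu hw).1 hadm
  have hMu := S.mulPart_pos hp τx τy q u
  have hMw := S.mulPart_pos hp τx τy q w
  have hau2 := S.alpha2_pos u
  have haw2 := S.alpha2_pos w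
  rw [msvf_eq h htq p s q (by simp [hu]) hadm, msvf_eq h htq p s q hu hau,
    msvf_eq h htq p s q hw haw, mulPart_append h hp q hu hau huw, mul_mul_mul_comm,
    ← Real.mul_rpow hau2.le haw2.le]
  refine mul_le_mul_of_nonneg_left ?_ (by positivity)
  exact Real.rpow_le_rpow_of_nonpos (mul_pos hau2 haw2) (S.alpha2_mul_le u w) (by linarith)

/-- Above the threshold the modified singular value function is supermultiplicative. -/
lemma le_msvf_append {S : BoxLikeGIFS V E} {τx τy : V → ℝ} (h : S.TauInvariant τx τy) {tq : ℝ}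
    (htq : ∀ v, τx v + τy v = tq) {p : E → ℝ} (hp : ∀ e, 0 < p e) {s : ℝ} (hs : tq ≤ s)
    (q : ℝ) {u w : List E} (hu : u ≠ []) (hw : w ≠ []) (hadm : S.Admissible (u ++ w)) :
    S.msvf p τx τy s q u * S.msvf p τx τy s q w ≤ S.msvf p τx τy s q (u ++ w) := by
  obtain ⟨hau, haw, huw⟩ := (S.admissible_append_iff hu hw).1 hadm
  have hMu := S.mulPart_pos hp τx τy q u
  have hMw := S.mulPart_pos hp τx τy q w
  have hau2 := S.alpha2_pos u
  have haw2 := S.alpha2_pos w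
  rw [msvf_eq h htq p s q (by simp [hu]) hadm, msvf_eq h htq p s q hu hau,
    msvf_eq h htq p s q hw haw, mulPart_append h hp q hu hau huw, mul_mul_mul_comm,
    ← Real.mul_rpow hau2.le haw2.le]
  refine mul_le_mul_of_nonneg_left ?_ (by positivity)
  exact Real.rpow_le_rpow (mul_pos hau2 haw2).le (S.alpha2_mul_le u w) (by linarith)

/-! ### Norms of the matrices as sums over words -/

/-- The modified singular value function, extended by zero to inadmissible words. -/
noncomputable def admMsvf (S : BoxLikeGIFS V E) (p : E → ℝ) (τx τy : V → ℝ) (s q : ℝ)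
    (w : List E) : ℝ :=
  if S.Admissible w then S.msvf p τx τy s q w else 0

lemma admMsvf_nonneg (S : BoxLikeGIFS V E) {p : E → ℝ} (hp : ∀ e, 0 < p e) (τx τy : V → ℝ)
    (s q : ℝ) (w : List E) : 0 ≤ S.admMsvf p τx τy s q w := by
  unfold admMsvf
  split_ifs
  · exact (S.msvf_pos hp τx τy s q w).le
  · exact le_rfl

lemma admMsvf_append_le {S : BoxLikeGIFS V E} {τx τy : V → ℝ} (h : S.TauInvariant τx τy)
    {tq : ℝ} (htq : ∀ v, τx v + τy v = tq) {p : E → ℝ} (hp : ∀ e, 0 < p e) {s : ℝ}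
    (hs : s ≤ tq) (q : ℝ) {u w : List E} (hu : u ≠ []) (hw : w ≠ []) :
    S.admMsvf p τx τy s q (u ++ w) ≤ S.admMsvf p τx τy s q u * S.admMsvf p τx τy s q w := by
  by_cases hadm : S.Admissible (u ++ w)
  · obtain ⟨hau, haw, -⟩ := (S.admissible_append_iff hu hw).1 hadm
    simpa [admMsvf, hadm, hau, haw] using msvf_append_le h htq hp hs q hu hw hadm
  · rw [admMsvf, if_neg hadm]
    exact mul_nonneg (S.admMsvf_nonneg hp τx τy s q u) (S.admMsvf_nonneg hp τx τy s q w)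

lemma le_admMsvf_append {S : BoxLikeGIFS V E} {τx τy : V → ℝ} (h : S.TauInvariant τx τy)
    {tq : ℝ} (htq : ∀ v, τx v + τy v = tq) {p : E → ℝ} (hp : ∀ e, 0 < p e) {s : ℝ}
    (hs : tq ≤ s) (q : ℝ) {u w : List E} (hu : u ≠ []) (hw : w ≠ [])
    (huw : S.wordTerm u = S.wordInit w) :
    S.admMsvf p τx τy s q u * S.admMsvf p τx τy s q w ≤ S.admMsvf p τx τy s q (u ++ w) := by
  by_cases hau : S.Admissible u
  · by_cases haw : S.Admissible w
    · have hadm := (S.admissible_append_iff hu hw).2 ⟨hau, haw, huw⟩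
      simpa [admMsvf, hadm, hau, haw] using le_msvf_append h htq hp hs q hu hw hadm
    · simpa [admMsvf, haw] using S.admMsvf_nonneg hp τx τy s q (u ++ w)
  · simpa [admMsvf, hau] using S.admMsvf_nonneg hp τx τy s q (u ++ w)

lemma mnorm_Amat [Fintype V] [Fintype E] (S : BoxLikeGIFS V E) {p : E → ℝ}
    (hp : ∀ e, 0 < p e) (τx τy : V → ℝ) (s q : ℝ) (k : ℕ) :
    mnorm (S.Amat p τx τy s q k) = ∑ f : Fin k → E, S.admMsvf p τx τy s q (List.ofFn f) := by
  have habs : ∀ v v', |S.Amat p τx τy s q k v v'| = S.Amat p τx τy s q k v v' := by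
    intro v v'
    refine abs_of_nonneg (Finset.sum_nonneg fun f _ => ?_)
    split_ifs
    · exact (S.msvf_pos hp τx τy s q _).le
    · exact le_rfl
  simp only [mnorm, habs]
  simp only [Amat]
  rw [Finset.sum_congr rfl fun v _ => Finset.sum_comm, Finset.sum_comm]
  refine Finset.sum_congr rfl fun f _ => ?_
  by_cases ha : S.Admissible (List.ofFn f) <;> simp [admMsvf, ha, ite_and]

lemma sum_ofFn_add [Fintype E] (F : List E → ℝ) (k l : ℕ) :
    ∑ f : Fin (k + l) → E, F (List.ofFn f) =
      ∑ u : Fin k → E, ∑ w : Fin l → E, F (List.ofFn u ++ List.ofFn w) := by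
  rw [← (Fin.appendEquiv k l).sum_comp, Fintype.sum_prod_type]
  simp [Fin.appendEquiv, List.ofFn_fin_append]

lemma ofFn_ne_nil {k : ℕ} (hk : 1 ≤ k) (f : Fin k → E) : List.ofFn f ≠ [] := by
  simp only [ne_eq, List.ofFn_eq_nil_iff]
  omega

/-- In a strongly connected graph any two vertices are joined by a nonempty word. -/
lemma StronglyConnected.exists_word {S : BoxLikeGIFS V E} (hSC : S.StronglyConnected)
    (v v' : V) :
    ∃ w : List E, w ≠ [] ∧ S.Admissible w ∧ S.wordInit w = v ∧ S.wordTerm w = v' := by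
  induction hSC v v' with
  | single h =>
    obtain ⟨e, rfl, rfl⟩ := h
    exact ⟨[e], by simp, List.IsChain.singleton e, rfl, rfl⟩
  | tail _ h ih =>
    obtain ⟨w, hw, hadm, hi, ht⟩ := ih
    obtain ⟨e, he, rfl⟩ := h
    refine ⟨w ++ [e], by simp, (S.admissible_append_iff hw (by simp)).2
      ⟨hadm, List.IsChain.singleton e, ?_⟩, ?_, wordTerm_concat _ _ _⟩
    · rw [ht, wordInit_cons, he]
    · rw [S.wordInit_append hw, hi]

end Vertices

/-! ### The norm estimates -/

lemma exists_pos_le_of_finite {ι : Type*} [Finite ι] [Nonempty ι] {f : ι → ℝ}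
    (hf : ∀ i, 0 < f i) : ∃ c : ℝ, 0 < c ∧ ∀ i, c ≤ f i := by
  obtain ⟨i, hi⟩ := Finite.exists_min f
  exact ⟨f i, hf i, hi⟩

/-- Some fibre carries at least the average of a finite sum. -/
lemma exists_sum_le_card_mul_fiber {α V : Type*} [Fintype α] [Fintype V] [Nonempty V]
    (t : α → V) (g : α → ℝ) :
    ∃ v, ∑ a, g a ≤ Fintype.card V * ∑ a, if t a = v then g a else 0 := by
  obtain ⟨v₀, hv₀⟩ := Finite.exists_max fun v => ∑ a, if t a = v then g a else 0
  refine ⟨v₀, ?_⟩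
  calc ∑ a, g a = ∑ v, ∑ a, if t a = v then g a else 0 := by
        rw [Finset.sum_comm]
        simp
    _ ≤ ∑ _v : V, ∑ a, if t a = v₀ then g a else 0 := Finset.sum_le_sum fun v _ => hv₀ v
    _ = _ := by simp

variable [Nonempty V] [Fintype V] [Fintype E]

lemma mnorm_Amat_add_le {S : BoxLikeGIFS V E} {τx τy : V → ℝ} (h : S.TauInvariant τx τy)
    {tq : ℝ} (htq : ∀ v, τx v + τy v = tq) {p : E → ℝ} (hp : ∀ e, 0 < p e) {s : ℝ}
    (hs : s ≤ tq) (q : ℝ) {k l : ℕ} (hk : 1 ≤ k) (hl : 1 ≤ l) :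
    mnorm (S.Amat p τx τy s q (k + l)) ≤
      mnorm (S.Amat p τx τy s q k) * mnorm (S.Amat p τx τy s q l) := by
  rw [mnorm_Amat S hp, mnorm_Amat S hp, mnorm_Amat S hp, sum_ofFn_add, Finset.sum_mul_sum]
  exact Finset.sum_le_sum fun u _ => Finset.sum_le_sum fun w _ =>
    admMsvf_append_le h htq hp hs q (ofFn_ne_nil hk u) (ofFn_ne_nil hl w)

lemma mul_mnorm_Amat_le_succ {S : BoxLikeGIFS V E} {τx τy : V → ℝ}
    (h : S.TauInvariant τx τy) {tq : ℝ} (htq : ∀ v, τx v + τy v = tq) {p : E → ℝ}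
    (hp : ∀ e, 0 < p e) {s : ℝ} (hs : tq ≤ s) (q : ℝ) {c : ℝ}
    (hc : ∀ e, c ≤ S.admMsvf p τx τy s q [e]) {k : ℕ} (hk : 1 ≤ k) :
    c * mnorm (S.Amat p τx τy s q k) ≤ mnorm (S.Amat p τx τy s q (k + 1)) := by
  rw [mnorm_Amat S hp, mnorm_Amat S hp, sum_ofFn_add, Finset.mul_sum]
  refine Finset.sum_le_sum fun u _ => ?_
  obtain ⟨e, he⟩ := S.edge_exists (S.wordTerm (List.ofFn u))
  refine le_trans ?_ (Finset.single_le_sum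
    (f := fun w : Fin 1 → E => S.admMsvf p τx τy s q (List.ofFn u ++ List.ofFn w))
    (fun w _ => S.admMsvf_nonneg hp τx τy s q _) (Finset.mem_univ fun _ => e))
  have hofFn : List.ofFn (fun _ : Fin 1 => e) = [e] := by simp
  simp only [hofFn]
  refine le_trans ?_
    (le_admMsvf_append h htq hp hs q (ofFn_ne_nil hk u) (List.cons_ne_nil e []) he.symm)
  rw [mul_comm]
  exact mul_le_mul_of_nonneg_left (hc e) (S.admMsvf_nonneg hp τx τy s q _)

/-- Words ending at `i(g)` and words starting at `t(g)` are joined by the word `g`. -/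
lemma mul_sum_mul_sum_le_mnorm_Amat {S : BoxLikeGIFS V E} {τx τy : V → ℝ}
    (h : S.TauInvariant τx τy) {tq : ℝ} (htq : ∀ v, τx v + τy v = tq) {p : E → ℝ}
    (hp : ∀ e, 0 < p e) {s : ℝ} (hs : tq ≤ s) (q : ℝ) {g : List E} (hg : g ≠ [])
    {k l : ℕ} (hk : 1 ≤ k) (hl : 1 ≤ l) :
    S.admMsvf p τx τy s q g *
      ((∑ u : Fin k → E, if S.wordTerm (List.ofFn u) = S.wordInit g then
          S.admMsvf p τx τy s q (List.ofFn u) else 0) *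
        ∑ w : Fin l → E, if S.wordInit (List.ofFn w) = S.wordTerm g then
          S.admMsvf p τx τy s q (List.ofFn w) else 0) ≤
      mnorm (S.Amat p τx τy s q (k + g.length + l)) := by
  have hnn := S.admMsvf_nonneg hp τx τy s q
  rw [mnorm_Amat S hp, sum_ofFn_add,
    sum_ofFn_add (fun x => ∑ w : Fin l → E, S.admMsvf p τx τy s q (x ++ List.ofFn w)),
    Finset.sum_mul_sum, Finset.mul_sum]
  refine Finset.sum_le_sum fun u _ => ?_
  refine le_trans ?_ (Finset.single_le_sum
    (f := fun y : Fin g.length → E => ∑ w : Fin l → E,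
      S.admMsvf p τx τy s q (List.ofFn u ++ List.ofFn y ++ List.ofFn w))
    (fun y _ => Finset.sum_nonneg fun w _ => hnn _) (Finset.mem_univ g.get))
  simp only [List.ofFn_get]
  rw [Finset.mul_sum]
  refine Finset.sum_le_sum fun w _ => ?_
  split_ifs with hu hw
  · have hune := ofFn_ne_nil hk u
    have h1 := le_admMsvf_append h htq hp hs q hune hg hu
    have h2 := le_admMsvf_append h htq hp hs q (u := List.ofFn u ++ g) (by simp [hg])
      (ofFn_ne_nil hl w) (by rw [S.wordTerm_append _ hg, hw])
    calc _ = S.admMsvf p τx τy s q (List.ofFn u) * S.admMsvf p τx τy s q g *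
          S.admMsvf p τx τy s q (List.ofFn w) := by ring
      _ ≤ _ := (mul_le_mul_of_nonneg_right h1 (hnn _)).trans h2
  all_goals simpa using hnn _

lemma exists_le_mnorm_Amat_add {S : BoxLikeGIFS V E} {τx τy : V → ℝ}
    (h : S.TauInvariant τx τy) (hSC : S.StronglyConnected) {tq : ℝ}
    (htq : ∀ v, τx v + τy v = tq) {p : E → ℝ} (hp : ∀ e, 0 < p e) {s : ℝ} (hs : tq ≤ s)
    (q : ℝ) :
    ∃ c : ℝ, 0 < c ∧ ∃ J : ℕ,
      (∀ k : ℕ, 1 ≤ k →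
        c * mnorm (S.Amat p τx τy s q k) ≤ mnorm (S.Amat p τx τy s q (k + 1))) ∧
      (∀ k l : ℕ, 1 ≤ k → 1 ≤ l → ∃ j : ℕ, j ≤ J ∧
        c * (mnorm (S.Amat p τx τy s q k) * mnorm (S.Amat p τx τy s q l)) ≤
          mnorm (S.Amat p τx τy s q (k + j + l))) := by
  have hE : Nonempty E := ⟨(S.edge_exists (Classical.arbitrary V)).choose⟩
  have hpos : ∀ w, S.Admissible w → 0 < S.admMsvf p τx τy s q w := fun w hw => by
    rw [admMsvf, if_pos hw]
    exact S.msvf_pos hp τx τy s q w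
  have hnn := S.admMsvf_nonneg hp τx τy s q
  choose g hg hadm hinit hterm using hSC.exists_word
  obtain ⟨c₁, hc₁, hc₁'⟩ := exists_pos_le_of_finite (f := fun e => S.admMsvf p τx τy s q [e])
    fun e => hpos _ (List.IsChain.singleton e)
  obtain ⟨c₂, hc₂, hc₂'⟩ := exists_pos_le_of_finite
    (f := fun v : V × V => S.admMsvf p τx τy s q (g v.1 v.2)) fun v => hpos _ (hadm _ _)
  obtain ⟨v₀, hv₀⟩ := Finite.exists_max fun v : V × V => (g v.1 v.2).length
  have hn : (0 : ℝ) < Fintype.card V := Nat.cast_pos.2 Fintype.card_pos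
  set n : ℝ := (Fintype.card V : ℝ)
  have hnorm : ∀ k, 0 ≤ mnorm (S.Amat p τx τy s q k) := fun k =>
    Finset.sum_nonneg fun _ _ => Finset.sum_nonneg fun _ _ => abs_nonneg _
  refine ⟨min c₁ (c₂ / (n * n)), by positivity, (g v₀.1 v₀.2).length, fun k hk => ?_,
    fun k l hk hl => ?_⟩
  · exact (mul_le_mul_of_nonneg_right (min_le_left _ _) (hnorm k)).trans
      (mul_mnorm_Amat_le_succ h htq hp hs q hc₁' hk)
  · obtain ⟨v, hv⟩ := exists_sum_le_card_mul_fiber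
      (fun u : Fin k → E => S.wordTerm (List.ofFn u))
      fun u => S.admMsvf p τx τy s q (List.ofFn u)
    obtain ⟨v', hv'⟩ := exists_sum_le_card_mul_fiber
      (fun w : Fin l → E => S.wordInit (List.ofFn w))
      fun w => S.admMsvf p τx τy s q (List.ofFn w)
    refine ⟨(g v v').length, hv₀ (v, v'), ?_⟩
    have hjoin := mul_sum_mul_sum_le_mnorm_Amat h htq hp hs q (hg v v') hk hl
    rw [hinit, hterm] at hjoin
    rw [← mnorm_Amat S hp] at hv hv'
    refine le_trans ?_ hjoin
    have hU : 0 ≤ ∑ u : Fin k → E, if S.wordTerm (List.ofFn u) = v then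
        S.admMsvf p τx τy s q (List.ofFn u) else 0 :=
      Finset.sum_nonneg fun u _ => by split_ifs <;> simp [hnn]
    have hW : 0 ≤ ∑ w : Fin l → E, if S.wordInit (List.ofFn w) = v' then
        S.admMsvf p τx τy s q (List.ofFn w) else 0 :=
      Finset.sum_nonneg fun w _ => by split_ifs <;> simp [hnn]
    set U := ∑ u : Fin k → E, if S.wordTerm (List.ofFn u) = v then
        S.admMsvf p τx τy s q (List.ofFn u) else 0
    set W := ∑ w : Fin l → E, if S.wordInit (List.ofFn w) = v' then
        S.admMsvf p τx τy s q (List.ofFn w) else 0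
    calc min c₁ (c₂ / (n * n)) *
          (mnorm (S.Amat p τx τy s q k) * mnorm (S.Amat p τx τy s q l))
        ≤ c₂ / (n * n) * ((n * U) * (n * W)) := by
          have h1 := hnorm k
          have h2 := hnorm l
          gcongr
          exact min_le_right _ _
      _ = c₂ * (U * W) := by field_simp
      _ ≤ S.admMsvf p τx τy s q (g v v') * (U * W) :=
          mul_le_mul_of_nonneg_right (hc₂' (v, v')) (mul_nonneg hU hW)

end BoxLikeGIFS

end LqGIFS

open LqGIFS MeasureTheory Filter Set

/-- norm estimates for the matrices `A_k^{s,q}`.  If `s ≤ t(q)` the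
1-norms `‖A_k^{s,q}‖` are submultiplicative; if `s > t(q)` there are `c > 0` and `J ∈ ℕ`
with `‖A_{k+1}^{s,q}‖ ≥ c ‖A_k^{s,q}‖` and
`max_{0 ≤ j ≤ J} ‖A_{k+j+l}^{s,q}‖ ≥ c ‖A_k^{s,q}‖ ‖A_l^{s,q}‖`. -/
theorem statement15
    {V E : Type} [Fintype V] [Fintype E] [Nonempty V]
    (S : BoxLikeGIFS V E) (hSC : S.StronglyConnected)
    (p : E → ℝ) (hp : S.IsWeights p)
    (μ : V → Measure (ℝ × ℝ)) (hμ : S.IsGDMeasure p μ)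
    (s q : ℝ) (hq : 0 ≤ q)
    (τx τy : V → ℝ)
    (hτx : ∀ v : V, HasLq1 ((μ v).map Prod.fst) q (τx v))
    (hτy : ∀ v : V, HasLq1 ((μ v).map Prod.snd) q (τy v))
    (tq : ℝ) (htq : ∀ v : V, τx v + τy v = tq) :
    (s ≤ tq → ∀ k l : ℕ, 1 ≤ k → 1 ≤ l →
      mnorm (S.Amat p τx τy s q (k + l)) ≤
        mnorm (S.Amat p τx τy s q k) * mnorm (S.Amat p τx τy s q l)) ∧
    (tq < s → ∃ c : ℝ, 0 < c ∧ ∃ J : ℕ,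
      (∀ k : ℕ, 1 ≤ k →
        c * mnorm (S.Amat p τx τy s q k) ≤ mnorm (S.Amat p τx τy s q (k + 1))) ∧
      (∀ k l : ℕ, 1 ≤ k → 1 ≤ l → ∃ j : ℕ, j ≤ J ∧
        c * (mnorm (S.Amat p τx τy s q k) * mnorm (S.Amat p τx τy s q l)) ≤
          mnorm (S.Amat p τx τy s q (k + j + l)))) := by
  have hinv := BoxLikeGIFS.tauInvariant_of_hasLq1 hp hμ hq hτx hτy htq
  exact ⟨fun hs _ _ hk hl => BoxLikeGIFS.mnorm_Amat_add_le hinv htq hp.1 hs q hk hl,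
    fun hs => BoxLikeGIFS.exists_le_mnorm_Amat_add hinv hSC htq hp.1 hs.le q⟩
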